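/- Let V be a finite nonempty set and let E be a collection of finite subsets of V that is downward closed (if e ∈ E and e' ⊆ e then e' ∈ E) and contains every singleton {v}, v ∈ V (a joint measurability hypergraph). Then there exist d ≥ 1 and, for each v ∈ V, a binary POVM F_v on ℂ^d (a pair of positive semidefinite d×d complex matrices summing to the identity) such that for every nonempty subset S ⊆ V, the family {F_v : v ∈ S} is jointly measurable if and only if S ∈ E. That is, every joint measurability hypergraph admits a quantum realization with POVMs. -/

import Mathlib

open scoped BigOperators ComplexOrder

/-!
Take pairwise anticommuting Hermitian unitaries `G v`. A real combination `∑ v, c v • G v` squares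
to `(∑ v, c v ^ 2) • 1`, so the noisy two-outcome measurements `(1 ± a v • G v) / 2` are jointly
measurable when `∑ a v ^ 2 ≤ 1`, whereas joint measurability of `k` of them forces `∑ a v ≤ √k`.
Giving every vertex of a `k`-set `T` the weight `1 / √(k - 1)` and all other vertices the weight `0`
therefore makes `T` incompatible and every set not containing `T` compatible. A direct sum of
measurements is jointly measurable exactly when all its blocks are, so the direct sum of these
families over all `T ∉ E` is jointly measurable on precisely the members of `E`.
-/

namespace JointMeasurability

open Finset Matrix

section BlockMatrix

variable {R m n o Ω : Type*} [Ring R]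

lemma submatrix_sum (s : Finset Ω) (A : Ω → Matrix n n R) (e : m → n) :
    (∑ x ∈ s, A x).submatrix e e = ∑ x ∈ s, (A x).submatrix e e := by
  ext
  simp [Matrix.sum_apply]

lemma blockDiagonal_sum [DecidableEq o] (s : Finset Ω) (A : Ω → o → Matrix n n R) :
    blockDiagonal (fun k => ∑ x ∈ s, A x k) = ∑ x ∈ s, blockDiagonal (A x) := by
  rw [← sum_fn]
  exact map_sum (blockDiagonalAddMonoidHom n n o R) A s

lemma posSemidef_blockDiagonal [PartialOrder R] [StarRing R] [AddLeftMono R] [Finite n] [Finite o]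
    [DecidableEq o] {A : o → Matrix n n R} (hA : ∀ k, (A k).PosSemidef) :
    (blockDiagonal A).PosSemidef := by
  cases nonempty_fintype n
  cases nonempty_fintype o
  refine .of_dotProduct_mulVec_nonneg ?_ fun x => ?_
  · rw [IsHermitian, blockDiagonal_conjTranspose]
    exact congrArg blockDiagonal (funext fun k => (hA k).isHermitian)
  · have hblocks : star x ⬝ᵥ blockDiagonal A *ᵥ x =
        ∑ k, star (fun i => x (i, k)) ⬝ᵥ A k *ᵥ fun i => x (i, k) := by
      simp [dotProduct, mulVec, blockDiagonal_apply, Fintype.sum_prod_type_right]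
    rw [hblocks]
    exact sum_nonneg fun k _ => (hA k).dotProduct_mulVec_nonneg _

end BlockMatrix

section POVM

variable {R m n o ι Ω : Type*} [Ring R] [PartialOrder R] [StarRing R]
  [DecidableEq m] [DecidableEq n] [DecidableEq o] [Fintype Ω]

/-- `M` is a positive operator-valued measure on `R^n` with finite outcome set `Ω`. -/
structure IsPOVM (M : Ω → Matrix n n R) : Prop where
  posSemidef : ∀ x, (M x).PosSemidef
  sum_eq_one : ∑ x, M x = 1

lemma isPOVM_iff {M : Ω → Matrix n n R} :
    IsPOVM M ↔ (∀ x, (M x).PosSemidef) ∧ ∑ x, M x = 1 :=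
  ⟨fun h => ⟨h.posSemidef, h.sum_eq_one⟩, fun h => ⟨h.1, h.2⟩⟩

namespace IsPOVM

lemma sum_fiber [AddLeftMono R] {K : Type*} [Fintype K] [DecidableEq K] {M : Ω → Matrix n n R}
    (hM : IsPOVM M) (p : Ω → K) : IsPOVM fun k => ∑ x with p x = k, M x where
  posSemidef _ := posSemidef_sum _ fun x _ => hM.posSemidef x
  sum_eq_one := by rw [sum_fiberwise, hM.sum_eq_one]

lemma submatrix {M : Ω → Matrix n n R} (hM : IsPOVM M) {e : m → n} (he : e.Injective) :
    IsPOVM fun x => (M x).submatrix e e where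
  posSemidef x := (hM.posSemidef x).submatrix e
  sum_eq_one := by rw [← submatrix_sum, hM.sum_eq_one, submatrix_one e he]

lemma blockDiagonal [AddLeftMono R] [Finite n] [Finite o] {M : o → Ω → Matrix n n R}
    (hM : ∀ k, IsPOVM (M k)) : IsPOVM fun x => Matrix.blockDiagonal fun k => M k x where
  posSemidef x := posSemidef_blockDiagonal fun k => (hM k).posSemidef x
  sum_eq_one := by
    rw [← blockDiagonal_sum, funext fun k => (hM k).sum_eq_one]
    exact blockDiagonal_one

end IsPOVM

variable [Fintype ι] [DecidableEq ι] {K : ι → Type*} [∀ i, Fintype (K i)] [∀ i, DecidableEq (K i)]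

/-- The family of measurements `M i`, with outcome sets `K i`, consists of the marginals of a single
POVM on the product of the outcome sets. -/
def JointlyMeasurable (M : ∀ i, K i → Matrix n n R) : Prop :=
  ∃ J : (∀ i, K i) → Matrix n n R, IsPOVM J ∧ ∀ i k, ∑ f with f i = k, J f = M i k

lemma JointlyMeasurable.isPOVM [AddLeftMono R] {M : ∀ i, K i → Matrix n n R}
    (hM : JointlyMeasurable M) (i : ι) : IsPOVM (M i) := by
  obtain ⟨J, hJ, hmarg⟩ := hM
  rw [← funext (hmarg i)]
  exact hJ.sum_fiber (· i)

lemma JointlyMeasurable.submatrix {M : ∀ i, K i → Matrix n n R} (hM : JointlyMeasurable M)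
    {e : m → n} (he : e.Injective) : JointlyMeasurable fun i k => (M i k).submatrix e e := by
  obtain ⟨J, hJ, hmarg⟩ := hM
  exact ⟨_, hJ.submatrix he, fun i k => by rw [← submatrix_sum, hmarg]⟩

lemma jointlyMeasurable_submatrix_equiv {M : ∀ i, K i → Matrix n n R} (e : m ≃ n) :
    JointlyMeasurable (fun i k => (M i k).submatrix e e) ↔ JointlyMeasurable M := by
  refine ⟨fun h => ?_, fun h => h.submatrix e.injective⟩
  simpa using h.submatrix e.symm.injective

lemma jointlyMeasurable_blockDiagonal_iff [AddLeftMono R] [Finite n] [Finite o]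
    {M : o → ∀ i, K i → Matrix n n R} :
    JointlyMeasurable (fun i k => blockDiagonal fun x => M x i k) ↔
      ∀ x, JointlyMeasurable (M x) := by
  refine ⟨fun h x => ?_, fun h => ?_⟩
  · convert h.submatrix (Prod.mk_left_injective x) with i k
    ext
    simp [blockDiagonal_apply]
  · choose J hJ hmarg using h
    exact ⟨_, .blockDiagonal hJ, fun i k => by simp only [← blockDiagonal_sum, hmarg]⟩

end POVM

section BoolSign

/-- The numerical value `±1` of a two-valued outcome. -/
def boolSign (b : Bool) : ℝ := if b then 1 else -1

lemma boolSign_mul_self (b : Bool) : boolSign b * boolSign b = 1 := by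
  cases b <;> simp [boolSign]

lemma boolSign_not (b : Bool) : boolSign (!b) = -boolSign b := by
  cases b <;> simp [boolSign]

variable {ι : Type*} [Fintype ι] [DecidableEq ι]

lemma sum_eq_zero_of_flip_eq_neg (i : ι) {g : (ι → Bool) → ℝ}
    (hg : ∀ f, g (Function.update f i (!f i)) = -g f) : ∑ f, g f = 0 := by
  have hflip : Function.Involutive fun f : ι → Bool => Function.update f i (!f i) :=
    fun f => by simp
  have hsum := Equiv.sum_comp hflip.toPerm g
  simp only [Function.Involutive.coe_toPerm, hg, sum_neg_distrib] at hsum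
  linarith

lemma sum_boolSign (i : ι) : ∑ f : ι → Bool, boolSign (f i) = 0 :=
  sum_eq_zero_of_flip_eq_neg i fun f => by simp [boolSign_not]

lemma sum_boolSign_mul_boolSign (i j : ι) :
    ∑ f : ι → Bool, boolSign (f i) * boolSign (f j) =
      if i = j then (Fintype.card (ι → Bool) : ℝ) else 0 := by
  split_ifs with hij
  · subst hij
    simp [boolSign_mul_self]
  · exact sum_eq_zero_of_flip_eq_neg i fun f => by
      simp [boolSign_not, Function.update_of_ne (Ne.symm hij)]

variable {M : Type*} [AddCommGroup M] [Module ℝ M]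

lemma sum_sum_boolSign_smul (x : ι → M) : ∑ f : ι → Bool, ∑ i, boolSign (f i) • x i = 0 := by
  rw [sum_comm]
  simp only [← sum_smul, sum_boolSign, zero_smul, sum_const_zero]

lemma sum_boolSign_smul_sum_boolSign_smul (x : ι → M) (i : ι) :
    ∑ f : ι → Bool, boolSign (f i) • ∑ j, boolSign (f j) • x j =
      (Fintype.card (ι → Bool) : ℝ) • x i := by
  simp only [smul_sum, smul_smul]
  rw [sum_comm]
  simp [← sum_smul, sum_boolSign_mul_boolSign]

end BoolSign

section Dichotomic

variable {𝕜 n ι Ω : Type*} [RCLike 𝕜] [DecidableEq n] [Fintype Ω]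

/-- The two-outcome measurement `(1 ± A) / 2` whose expected `±1` value is the observable `A`. -/
noncomputable def dichotomic (A : Matrix n n 𝕜) (b : Bool) : Matrix n n 𝕜 :=
  (1 / 2 : ℝ) • (1 + boolSign b • A)

lemma dichotomic_injective : (dichotomic : Matrix n n 𝕜 → Bool → Matrix n n 𝕜).Injective := by
  have hdiff (A : Matrix n n 𝕜) : dichotomic A true - dichotomic A false = A := by
    simp only [dichotomic, boolSign, if_true, Bool.false_eq_true, if_false]
    module
  intro A B hAB
  rw [← hdiff A, hAB, hdiff B]

lemma sum_fiber_eq_dichotomic {J : Ω → Matrix n n 𝕜} (hJ : ∑ x, J x = 1) (p : Ω → Bool)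
    (b : Bool) : ∑ x with p x = b, J x = dichotomic (∑ x, boolSign (p x) • J x) b := by
  calc ∑ x with p x = b, J x
      = ∑ x, (1 / 2 : ℝ) • (J x + boolSign b • boolSign (p x) • J x) := by
        rw [sum_filter]
        refine sum_congr rfl fun x _ => ?_
        cases b <;> cases p x <;> simp [boolSign, ← two_smul ℝ (J x)]
    _ = dichotomic (∑ x, boolSign (p x) • J x) b := by
        rw [← smul_sum, sum_add_distrib, hJ, ← smul_sum, dichotomic]

variable [Fintype ι] [DecidableEq ι]

lemma jointlyMeasurable_dichotomic_iff {A : ι → Matrix n n 𝕜} :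
    JointlyMeasurable (fun i => dichotomic (A i)) ↔
      ∃ J : (ι → Bool) → Matrix n n 𝕜, IsPOVM J ∧ ∀ i, ∑ f, boolSign (f i) • J f = A i := by
  refine exists_congr fun J => and_congr_right fun hJ => forall_congr' fun i => ?_
  simp only [sum_fiber_eq_dichotomic hJ.sum_eq_one]
  rw [← funext_iff, dichotomic_injective.eq_iff]

end Dichotomic

section Positivity

variable {𝕜 n : Type*} [RCLike 𝕜] [Fintype n]

lemma trace_mul_nonneg {A B : Matrix n n 𝕜} (hA : A.PosSemidef) (hB : B.PosSemidef) :
    0 ≤ (A * B).trace := by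
  obtain ⟨m, v, rfl⟩ := posSemidef_iff_eq_sum_vecMulVec.1 hA
  rw [sum_mul, trace_sum]
  refine sum_nonneg fun i _ => ?_
  rw [vecMulVec_mul, trace_vecMulVec, dotProduct_comm, ← dotProduct_mulVec]
  exact hB.dotProduct_mulVec_nonneg _

variable [DecidableEq n]

lemma posSemidef_smul_one_add {A : Matrix n n 𝕜} (hA : A.IsHermitian) {c r : ℝ}
    (hAA : A * A = c • (1 : Matrix n n 𝕜)) (hr : 0 < r) (hc : c ≤ r ^ 2) :
    (r • (1 : Matrix n n 𝕜) + A).PosSemidef := by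
  set B := r • (1 : Matrix n n 𝕜) + A with hB
  have hBherm : B.IsHermitian := (isHermitian_one.smul (.all r)).add hA
  have hsq : (B * B).PosSemidef := by
    simpa only [hBherm.eq] using posSemidef_conjTranspose_mul_self B
  have hgap : ((r ^ 2 - c) • (1 : Matrix n n 𝕜)).PosSemidef :=
    PosSemidef.one.smul (sub_nonneg.2 hc)
  have hdecomp : B = (2 * r)⁻¹ • (B * B + (r ^ 2 - c) • (1 : Matrix n n 𝕜)) := by
    have hBB : B * B + (r ^ 2 - c) • (1 : Matrix n n 𝕜) = (2 * r) • B := by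
      rw [hB, add_mul, mul_add, mul_add, hAA]
      simp only [smul_mul_assoc, mul_smul_comm, one_mul, mul_one]
      module
    rw [hBB, inv_smul_smul₀ (by positivity)]
  rw [hdecomp]
  exact (hsq.add hgap).smul (by positivity : (0 : ℝ) ≤ (2 * r)⁻¹)

end Positivity

section Clifford

variable {𝕜 n ι : Type*} [RCLike 𝕜] [Fintype n] [DecidableEq n]

/-- The matrices `G i` are Hermitian generators of a Clifford algebra: pairwise anticommuting
Hermitian unitaries. -/
structure IsClifford (G : ι → Matrix n n 𝕜) : Prop where
  isHermitian : ∀ i, (G i).IsHermitian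
  mul_self : ∀ i, G i * G i = 1
  anticomm : ∀ i j, i ≠ j → G i * G j + G j * G i = 0

namespace IsClifford

variable {G : ι → Matrix n n 𝕜}

lemma comp (hG : IsClifford G) {κ : Type*} {p : κ → ι} (hp : p.Injective) :
    IsClifford (G ∘ p) where
  isHermitian i := hG.isHermitian (p i)
  mul_self i := hG.mul_self (p i)
  anticomm i j hij := hG.anticomm (p i) (p j) (hp.ne hij)

/-- This is one step of the Jordan-Wigner construction. -/
lemma optionElim (hG : IsClifford G) :
    IsClifford fun i : Option ι =>
      i.elim (fromBlocks 1 0 0 (-1)) fun i => fromBlocks 0 (G i) (G i) 0 where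
  isHermitian := by
    rintro (_ | i)
    · simp [IsHermitian, fromBlocks_conjTranspose]
    · simp [IsHermitian, fromBlocks_conjTranspose, (hG.isHermitian i).eq]
  mul_self := by
    rintro (_ | i)
    · simp [fromBlocks_multiply]
    · simp [fromBlocks_multiply, hG.mul_self]
  anticomm := by
    rintro (_ | i) (_ | j) hij
    · exact absurd rfl hij
    · simp [fromBlocks_multiply, fromBlocks_add]
    · simp [fromBlocks_multiply, fromBlocks_add]
    · simp [fromBlocks_multiply, fromBlocks_add, hG.anticomm i j (by simpa using hij)]

end IsClifford

lemma exists_isClifford (𝕜 : Type*) [RCLike 𝕜] (ι : Type*) [Finite ι] :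
    ∃ (n : Type) (_ : Fintype n) (_ : DecidableEq n) (_ : Nonempty n) (G : ι → Matrix n n 𝕜),
      IsClifford G := by
  induction ι using Finite.induction_empty_option with
  | of_equiv e ih =>
    obtain ⟨n, _, _, _, G, hG⟩ := ih
    exact ⟨n, inferInstance, inferInstance, inferInstance, _, hG.comp e.symm.injective⟩
  | h_empty =>
    exact ⟨Unit, inferInstance, inferInstance, inferInstance, PEmpty.elim, nofun, nofun, nofun⟩
  | h_option ih =>
    obtain ⟨n, _, _, _, G, hG⟩ := ih
    exact ⟨n ⊕ n, inferInstance, inferInstance, inferInstance, _, hG.optionElim⟩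

namespace IsClifford

variable {G : ι → Matrix n n 𝕜} [Fintype ι]

lemma isHermitian_sum (hG : IsClifford G) (c : ι → ℝ) : (∑ i, c i • G i).IsHermitian := by
  simp only [IsHermitian, conjTranspose_sum, conjTranspose_smul, star_trivial,
    (hG.isHermitian _).eq]

lemma sum_mul_sum_self (hG : IsClifford G) (c : ι → ℝ) :
    (∑ i, c i • G i) * ∑ i, c i • G i = (∑ i, c i ^ 2) • (1 : Matrix n n 𝕜) := by
  set X := ∑ i, c i • G i with hX
  have hexpand : X * X = ∑ i, ∑ j, (c i * c j) • (G i * G j) := by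
    simp only [hX, sum_mul_sum, smul_mul_smul_comm]
  have hswap : X * X = ∑ i, ∑ j, (c i * c j) • (G j * G i) := by
    rw [hexpand, sum_comm]
    exact sum_congr rfl fun i _ => sum_congr rfl fun j _ => by rw [mul_comm (c j)]
  have hdouble : (2 : ℝ) • (X * X) = (2 : ℝ) • (∑ i, c i ^ 2) • (1 : Matrix n n 𝕜) := by
    calc (2 : ℝ) • (X * X)
        = ∑ i, ∑ j, (c i * c j) • (G i * G j + G j * G i) := by
          rw [two_smul]
          nth_rewrite 1 [hexpand]
          rw [hswap]
          simp only [← sum_add_distrib, smul_add]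
      _ = ∑ i, (c i * c i) • (G i * G i + G i * G i) := by
          refine sum_congr rfl fun i _ => Fintype.sum_eq_single i fun j hj => ?_
          rw [hG.anticomm i j hj.symm, smul_zero]
      _ = (2 : ℝ) • (∑ i, c i ^ 2) • (1 : Matrix n n 𝕜) := by
          simp only [hG.mul_self, ← sum_smul, ← sq]
          rw [← two_smul ℝ, smul_comm]
  exact smul_right_injective _ two_ne_zero hdouble

lemma posSemidef_smul_one_add_sum (hG : IsClifford G) {c : ι → ℝ} {r : ℝ} (hr : 0 < r)
    (hc : ∑ i, c i ^ 2 ≤ r ^ 2) : (r • (1 : Matrix n n 𝕜) + ∑ i, c i • G i).PosSemidef :=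
  posSemidef_smul_one_add (hG.isHermitian_sum c) (hG.sum_mul_sum_self c) hr hc

variable [DecidableEq ι]

theorem jointlyMeasurable_dichotomic (hG : IsClifford G) {a : ι → ℝ} (ha : ∑ i, a i ^ 2 ≤ 1) :
    JointlyMeasurable fun i => dichotomic (a i • G i) := by
  have hN : (Fintype.card (ι → Bool) : ℝ) ≠ 0 := by simp
  refine jointlyMeasurable_dichotomic_iff.2 ⟨fun f => (Fintype.card (ι → Bool) : ℝ)⁻¹ •
    (1 + ∑ i, boolSign (f i) • a i • G i), ⟨fun f => ?_, ?_⟩, fun i => ?_⟩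
  · have hcoeff : ∑ i, (boolSign (f i) * a i) ^ 2 ≤ 1 ^ 2 := by
      simpa only [mul_pow, sq (boolSign _), boolSign_mul_self, one_mul, one_pow] using ha
    have hpos := hG.posSemidef_smul_one_add_sum one_pos hcoeff
    simp only [one_smul, mul_smul] at hpos
    exact hpos.smul (by positivity : (0 : ℝ) ≤ (Fintype.card (ι → Bool) : ℝ)⁻¹)
  · rw [← smul_sum, sum_add_distrib, sum_sum_boolSign_smul, add_zero, sum_const, card_univ,
      ← Nat.cast_smul_eq_nsmul ℝ, inv_smul_smul₀ hN]
  · have hone : ∑ f : ι → Bool, boolSign (f i) • (1 : Matrix n n 𝕜) = 0 := by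
      rw [← sum_smul, sum_boolSign, zero_smul]
    rw [sum_congr rfl fun f _ => smul_comm _ _ _, ← smul_sum]
    simp only [smul_add, sum_add_distrib]
    rw [hone, smul_zero, zero_add, sum_boolSign_smul_sum_boolSign_smul, inv_smul_smul₀ hN]

theorem sum_le_sqrt_card_of_jointlyMeasurable [Nonempty n] (hG : IsClifford G) {a : ι → ℝ}
    (h : JointlyMeasurable fun i => dichotomic (a i • G i)) :
    ∑ i, a i ≤ √(Fintype.card ι) := by
  obtain _ | _ := isEmpty_or_nonempty ι
  · simp
  obtain ⟨J, hJ, hmean⟩ := jointlyMeasurable_dichotomic_iff.1 h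
  set r := √(Fintype.card ι : ℝ) with hr
  have hpos (f : ι → Bool) : (r • (1 : Matrix n n 𝕜) - ∑ i, boolSign (f i) • G i).PosSemidef := by
    have hcoeff : ∑ i, (-boolSign (f i)) ^ 2 ≤ r ^ 2 := by
      simp [hr, sq (boolSign _), boolSign_mul_self]
    simpa only [neg_smul, sum_neg_distrib, ← sub_eq_add_neg] using
      hG.posSemidef_smul_one_add_sum (by positivity) hcoeff
  have hcorr : ∑ f, (∑ i, boolSign (f i) • G i) * J f = (∑ i, a i) • (1 : Matrix n n 𝕜) := by
    calc ∑ f, (∑ i, boolSign (f i) • G i) * J f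
        = ∑ i, G i * ∑ f, boolSign (f i) • J f := by
          simp only [sum_mul, mul_sum, smul_mul_assoc, mul_smul_comm]
          exact sum_comm
      _ = (∑ i, a i) • (1 : Matrix n n 𝕜) := by
          simp only [hmean, mul_smul_comm, hG.mul_self, sum_smul]
  have htrace : 0 ≤ ((r - ∑ i, a i) • (1 : Matrix n n 𝕜)).trace := by
    have hsum : ∑ f, (r • (1 : Matrix n n 𝕜) - ∑ i, boolSign (f i) • G i) * J f =
        (r - ∑ i, a i) • (1 : Matrix n n 𝕜) := by
      simp only [sub_mul, sum_sub_distrib, smul_mul_assoc, one_mul, ← smul_sum, hJ.sum_eq_one]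
      rw [hcorr, sub_smul]
    rw [← hsum, trace_sum]
    exact sum_nonneg fun f _ => trace_mul_nonneg (hpos f) (hJ.posSemidef f)
  rw [trace_smul, trace_one, RCLike.real_smul_eq_coe_mul, ← RCLike.ofReal_natCast,
    ← RCLike.ofReal_mul, RCLike.ofReal_nonneg] at htrace
  exact sub_nonneg.1 (nonneg_of_mul_nonneg_left htrace (by positivity))

end IsClifford

end Clifford

section Hypergraph

variable {V : Type*} [DecidableEq V]

/-- Weights that make `T` a minimal incompatible set of Clifford measurements if `2 ≤ #T`. If `T` is
a singleton, then the square root is `0` and so are all the weights. -/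
noncomputable def obstructionWeight (T : Finset V) (v : V) : ℝ :=
  if v ∈ T then (√(#T - 1))⁻¹ else 0

lemma sum_obstructionWeight_sq_le_one {S T : Finset V} (hTS : ¬T ⊆ S) :
    ∑ v ∈ S, obstructionWeight T v ^ 2 ≤ 1 := by
  have hlt : #(S ∩ T) < #T :=
    card_lt_card (inter_subset_right.ssubset_of_ne fun h => hTS (inter_eq_right.1 h))
  have hle : (#(S ∩ T) : ℝ) ≤ #T - 1 := by
    rw [le_sub_iff_add_le]
    exact_mod_cast hlt
  have hnonneg : (0 : ℝ) ≤ #T - 1 := (Nat.cast_nonneg _).trans hle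
  calc ∑ v ∈ S, obstructionWeight T v ^ 2
      = #(S ∩ T) / (#T - 1 : ℝ) := by
        simp [obstructionWeight, ite_pow, Real.sq_sqrt hnonneg, div_eq_mul_inv]
    _ ≤ 1 := div_le_one_of_le₀ hle hnonneg

lemma sqrt_card_lt_sum_obstructionWeight {T : Finset V} (hT : 1 < #T) :
    √(#T) < ∑ v ∈ T, obstructionWeight T v := by
  have hT' : (0 : ℝ) < #T - 1 := sub_pos.2 (by exact_mod_cast hT)
  have hsum : ∑ v ∈ T, obstructionWeight T v = #T / √(#T - 1) := by
    simp [obstructionWeight, div_eq_mul_inv]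
  rw [hsum, lt_div_iff₀ (Real.sqrt_pos.2 hT'), ← Real.sqrt_mul (Nat.cast_nonneg _),
    Real.sqrt_lt' (by linarith)]
  nlinarith

variable {𝕜 n : Type*} [RCLike 𝕜] [DecidableEq n]

/-- The realization of the hypergraph `E`: the direct sum, over all `T ∉ E`, of Clifford
measurements having `T` as a minimal incompatible set. The blocks with `T ∈ E` hold trivial
measurements and only keep the dimension positive. -/
noncomputable def hypergraphPOVM (G : V → Matrix n n 𝕜) (E : Finset (Finset V)) (v : V)
    (b : Bool) : Matrix (n × Finset V) (n × Finset V) 𝕜 :=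
  blockDiagonal fun T => dichotomic ((if T ∈ E then 0 else obstructionWeight T v) • G v) b

theorem jointlyMeasurable_hypergraphPOVM_iff [Finite V] [Fintype n] [Nonempty n]
    {G : V → Matrix n n 𝕜} (hG : IsClifford G) {E : Finset (Finset V)}
    (hdown : ∀ e ∈ E, ∀ e' ⊆ e, e' ∈ E) (hsingle : ∀ v : V, {v} ∈ E)
    {S : Finset V} (hS : S.Nonempty) :
    JointlyMeasurable (fun v : S => hypergraphPOVM G E v) ↔ S ∈ E := by
  have hGS : IsClifford fun v : S => G v := hG.comp Subtype.val_injective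
  refine jointlyMeasurable_blockDiagonal_iff.trans ⟨fun h => ?_, fun hSE T => ?_⟩
  · by_contra hSE
    have hcard : 1 < #S := by
      obtain ⟨v, rfl⟩ | hS := hS.exists_eq_singleton_or_nontrivial
      · exact absurd (hsingle v) hSE
      · exact one_lt_card_iff_nontrivial.2 hS
    have hle := hGS.sum_le_sqrt_card_of_jointlyMeasurable (h S)
    simp only [hSE, if_false, Fintype.card_coe] at hle
    rw [sum_coe_sort S (obstructionWeight S)] at hle
    exact hle.not_gt (sqrt_card_lt_sum_obstructionWeight hcard)
  · apply hGS.jointlyMeasurable_dichotomic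
    rw [sum_coe_sort S fun v => (if T ∈ E then 0 else obstructionWeight T v) ^ 2]
    split_ifs with hT
    · simp
    · exact sum_obstructionWeight_sq_le_one fun hTS => hT (hdown S hSE T hTS)

end Hypergraph

end JointMeasurability

open JointMeasurability in
theorem all_joint_measurability_hypergraphs_quantum_realizable_general
    (𝕜 : Type*) [RCLike 𝕜] (V : Type*) [Finite V] [DecidableEq V]
    (E : Finset (Finset V))
    (hdown : ∀ e ∈ E, ∀ e' ⊆ e, e' ∈ E)
    (hsingle : ∀ v : V, ({v} : Finset V) ∈ E) :
    ∃ d : ℕ, 1 ≤ d ∧ ∃ F : V → Bool → Matrix (Fin d) (Fin d) 𝕜,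
      (∀ v, IsPOVM (F v)) ∧
        ∀ S : Finset V, S.Nonempty → (JointlyMeasurable (fun v : S => F v) ↔ S ∈ E) := by
  cases nonempty_fintype V
  obtain ⟨n, _, _, _, G, hG⟩ := exists_isClifford 𝕜 V
  let e := (Fintype.equivFin (n × Finset V)).symm
  have hiff (S : Finset V) (hS : S.Nonempty) :
      JointlyMeasurable (fun (v : S) b => (hypergraphPOVM G E v b).submatrix e e) ↔ S ∈ E :=
    (jointlyMeasurable_submatrix_equiv e).trans
      (jointlyMeasurable_hypergraphPOVM_iff hG hdown hsingle hS)
  exact ⟨_, Fintype.card_pos, fun v b => (hypergraphPOVM G E v b).submatrix e e,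
    fun v => ((hiff {v} (Finset.singleton_nonempty v)).2 (hsingle v)).isPOVM
      ⟨v, Finset.mem_singleton_self v⟩, hiff⟩

open JointMeasurability in
/-- **All joint measurability structures are quantum realizable.** For every joint measurability
hypergraph `(V, E)` (downward closed, containing all singletons) there are a dimension `d ≥ 1`
and binary POVMs `F v` on `ℂ^d` such that a nonempty set `S` of measurements is jointly
measurable precisely when `S ∈ E`. -/
theorem all_joint_measurability_hypergraphs_quantum_realizable
    (V : Type*) [Fintype V] [DecidableEq V] [Nonempty V]
    (E : Finset (Finset V))
    (hdown : ∀ e ∈ E, ∀ e' ⊆ e, e' ∈ E)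
    (hsingle : ∀ v : V, ({v} : Finset V) ∈ E) :
    ∃ d : ℕ, 1 ≤ d ∧
      ∃ F : V → Bool → Matrix (Fin d) (Fin d) ℂ,
        (∀ v b, (F v b).PosSemidef) ∧ (∀ v, F v false + F v true = 1) ∧
        ∀ S : Finset V, S.Nonempty →
          ((∃ J : (S → Bool) → Matrix (Fin d) (Fin d) ℂ,
              (∀ f, (J f).PosSemidef) ∧ (∑ f, J f = 1) ∧
                ∀ (v : S) (b : Bool),
                  ∑ f ∈ Finset.univ.filter (fun f => f v = b), J f = F v.1 b) ↔
            S ∈ E) := by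
  simpa only [JointlyMeasurable, isPOVM_iff, and_assoc, forall_and, Fintype.sum_bool, add_comm]
    using all_joint_measurability_hypergraphs_quantum_realizable_general ℂ V E hdown hsingle
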